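/- Let D ⊂ ℂ be a bounded simply connected domain with C^2 boundary and g : S^1 → ℂ^m a C^2 embedded curve such that the projection to the last coordinate ζ_m ∘ g : S^1 → ℂ parametrizes ∂D as an embedding. If ∫_{g(S^1)} φ = 0 for every holomorphic 1-form φ = Σ_a f_a(z) dz^a on ℂ^m (f_a entire), then there exists a holomorphic map G : D̄ → ℂ^m with G(∂D) = g(S^1). -/

import Mathlib

open Real

/-- A set `D ⊂ ℂ` has `C^2` boundary. -/
def HasC2Boundary (D : Set ℂ) : Prop :=
  ∀ x ∈ frontier D, ∃ (U : Set ℂ) (f : ℂ → ℝ),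
    IsOpen U ∧ x ∈ U ∧ ContDiff ℝ 2 f ∧ (∀ y ∈ U, fderiv ℝ f y ≠ 0) ∧
    D ∩ U = {y ∈ U | f y < 0}


namespace WHL

structure Loop (γ : ℝ → ℂ) : Prop where
  smooth : ContDiff ℝ 2 γ
  per : Function.Periodic γ (2 * π)
  inj : Set.InjOn γ (Set.Ico 0 (2 * π))
  reg : ∀ t, deriv γ t ≠ 0

lemma exists_rep (t s : ℝ) : ∃ (u : ℝ) (k : ℤ), |u| ≤ π ∧ s = t + u + k * (2 * π) := by
  refine ⟨(s - t) - round ((s - t) / (2 * π)) * (2 * π), round ((s - t) / (2 * π)), ?_, by ring⟩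
  have h := abs_sub_round ((s - t) / (2 * π))
  have hp : (0:ℝ) < 2 * π := by positivity
  have e : (s - t) - round ((s - t) / (2 * π)) * (2 * π)
      = ((s - t) / (2 * π) - round ((s - t) / (2 * π))) * (2 * π) := by
    field_simp
  rw [e, abs_mul, abs_of_pos hp]
  nlinarith [pi_pos]

lemma per_int {E : Type*} {h : ℝ → E} (hp : Function.Periodic h (2 * π)) (x : ℝ) (k : ℤ) :
    h (x + k * (2 * π)) = h x := by
  have := hp.int_mul k
  exact this x

lemma per_bound {h : ℝ → ℂ} (hc : Continuous h) (hp : Function.Periodic h (2 * π)) :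
    ∃ C, 0 < C ∧ ∀ t, ‖h t‖ ≤ C := by
  obtain ⟨C, hC⟩ := (isCompact_Icc (a := -π) (b := π)).exists_bound_of_continuousOn hc.continuousOn
  refine ⟨max C 1, by positivity, fun t => ?_⟩
  obtain ⟨u, k, hu, hs⟩ := exists_rep 0 t
  rw [hs, per_int hp, zero_add]
  exact (hC u (by rw [Set.mem_Icc]; exact abs_le.mp hu)).trans (le_max_left _ _)

lemma per_deriv {h : ℝ → ℂ} (hp : Function.Periodic h (2 * π)) :
    Function.Periodic (deriv h) (2 * π) := by
  intro t
  have : (fun x => h (x + 2 * π)) = h := funext hp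
  rw [← deriv_comp_add_const, this]

lemma per_lip {h : ℝ → ℂ} (hc : ContDiff ℝ 1 h) (hp : Function.Periodic h (2 * π)) :
    ∃ C, 0 < C ∧ ∀ t s, ‖h s - h t‖ ≤ C * |s - t| := by
  obtain ⟨C, hC, hb⟩ := per_bound (hc.continuous_deriv le_rfl) (per_deriv hp)
  refine ⟨C, hC, fun t s => ?_⟩
  exact Convex.norm_image_sub_le_of_norm_deriv_le (s := Set.univ)
    (fun x _ => (hc.differentiable one_ne_zero) x) (fun x _ => hb x) convex_univ trivial trivial

lemma Loop.inj' {γ : ℝ → ℂ} (L : Loop γ) {s t : ℝ} (h : γ s = γ t) :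
    ∃ k : ℤ, s = t + k * (2 * π) := by
  have hp : (0:ℝ) < 2 * π := by positivity
  have key : ∀ x, γ (toIcoMod hp 0 x) = γ x := fun x => by
    have := per_int L.per (toIcoMod hp 0 x) (toIcoDiv hp 0 x)
    rw [← this]; congr 1
    have := toIcoMod_add_toIcoDiv_zsmul hp 0 x
    rw [zsmul_eq_mul] at this; exact this
  have m : ∀ x, toIcoMod hp 0 x ∈ Set.Ico 0 (2 * π) := fun x => by
    have := toIcoMod_mem_Ico hp 0 x
    rwa [zero_add] at this
  have := L.inj (m t) (m s) (by rw [key, key, h])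
  rw [toIcoMod_eq_toIcoMod] at this
  obtain ⟨n, hn⟩ := this
  rw [zsmul_eq_mul] at hn
  exact ⟨n, by linarith⟩

lemma Loop.inj_small {γ : ℝ → ℂ} (L : Loop γ) {t u : ℝ} (hu : |u| ≤ π) (h : γ (t + u) = γ t) :
    u = 0 := by
  obtain ⟨k, hk⟩ := L.inj' h
  have : u = k * (2 * π) := by linarith
  rw [this, abs_mul, abs_of_pos (by positivity : (0:ℝ) < 2 * π)] at hu
  have h1 : |(k:ℝ)| < 1 := by nlinarith [pi_pos]
  have : k = 0 := by
    have : |k| < 1 := by exact_mod_cast h1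
    exact Int.abs_lt_one_iff.mp this
  simp [*]

lemma Loop.d_cont {γ : ℝ → ℂ} (L : Loop γ) : Continuous (deriv γ) :=
  L.smooth.continuous_deriv (by norm_num)

lemma Loop.hasDeriv {γ : ℝ → ℂ} (L : Loop γ) (t : ℝ) : HasDerivAt γ (deriv γ t) t :=
  (L.smooth.differentiable (by norm_num) t).hasDerivAt

lemma Loop.d_lower {γ : ℝ → ℂ} (L : Loop γ) : ∃ m, 0 < m ∧ ∀ t, m ≤ ‖deriv γ t‖ := by
  obtain ⟨x, -, hx⟩ := (isCompact_Icc (a := -π) (b := π)).exists_isMinOn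
    ⟨0, by constructor <;> linarith [pi_pos]⟩ L.d_cont.norm.continuousOn
  refine ⟨_, norm_pos_iff.mpr (L.reg x), fun t => ?_⟩
  obtain ⟨u, k, hu, hs⟩ := exists_rep 0 t
  rw [hs, per_int (per_deriv L.per), zero_add]
  exact hx (abs_le.mp hu)

/-- first order expansion -/
lemma Loop.taylor {γ : ℝ → ℂ} (L : Loop γ) :
    ∃ M, 0 < M ∧ (∀ t u, ‖γ (t + u) - γ t - u * deriv γ t‖ ≤ M * |u| * |u|) ∧
      ∀ t s, ‖deriv γ s - deriv γ t‖ ≤ M * |s - t| := by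
  have hd : ContDiff ℝ 1 (deriv γ) := by
    have := L.smooth
    rw [show (2 : WithTop ℕ∞) = 1 + 1 by norm_num, contDiff_succ_iff_deriv] at this
    exact this.2.2
  obtain ⟨M, hM, hl⟩ := per_lip hd (per_deriv L.per)
  refine ⟨M, hM, fun t u => ?_, hl⟩
  have hdf : ∀ v : ℝ, HasDerivAt (fun v : ℝ => γ (t + v) - v * deriv γ t)
      (deriv γ (t + v) - deriv γ t) v := fun v => by
    have h1 : HasDerivAt (fun v : ℝ => γ (t + v)) (deriv γ (t + v)) v :=
      (L.hasDeriv (t + v)).comp_const_add t v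
    have h2 : HasDerivAt (fun v : ℝ => (v : ℂ) * deriv γ t) (1 * deriv γ t) v :=
      (Complex.ofRealCLM.hasDerivAt (x := v)).mul_const _
    have h3 := h1.sub h2
    rw [one_mul] at h3
    exact h3
  have := Convex.norm_image_sub_le_of_norm_deriv_le (s := Set.Icc (-|u|) |u|) (x := 0) (y := u)
    (C := M * |u|)
    (f := fun v : ℝ => γ (t + v) - v * deriv γ t) (fun x _ => (hdf x).differentiableAt)
    (fun x hx => by
      rw [(hdf x).deriv]
      refine (hl _ _).trans ?_
      rw [add_sub_cancel_left]
      have := abs_le.mpr hx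
      gcongr) (convex_Icc _ _) (by simp) ⟨neg_abs_le u, le_abs_self u⟩
  simp only [add_zero, Complex.ofReal_zero, zero_mul, sub_zero, Real.norm_eq_abs] at this
  convert this using 1
  congr 1
  ring

lemma norm_cross (u ε : ℝ) (w : ℂ) : (‖w‖ / 2) * (|u| + |ε|) ≤ ‖u * w - ε * Complex.I * w‖ := by
  have : (u * w - ε * Complex.I * w) = (u - ε * Complex.I) * w := by ring
  rw [this, norm_mul]
  have h1 : |u| ≤ ‖(u - ε * Complex.I : ℂ)‖ := by
    simpa using Complex.abs_re_le_norm (u - ε * Complex.I : ℂ)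
  have h2 : |ε| ≤ ‖(u - ε * Complex.I : ℂ)‖ := by
    simpa using Complex.abs_im_le_norm (u - ε * Complex.I : ℂ)
  nlinarith [norm_nonneg w]

lemma Loop.tube {γ : ℝ → ℂ} (L : Loop γ) : ∃ c, 0 < c ∧ ∃ ε₀, 0 < ε₀ ∧ ∀ t u ε : ℝ,
    |u| ≤ π → |ε| ≤ ε₀ → c * (|u| + |ε|) ≤ ‖γ (t + u) - γ t - ε * Complex.I * deriv γ t‖ := by
  obtain ⟨m, hm, hml⟩ := L.d_lower
  obtain ⟨M, hM, hT, -⟩ := L.taylor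
  obtain ⟨B, hB, hBu⟩ := per_bound L.d_cont (per_deriv L.per)
  set δ := m / (4 * M) with hδ
  have hδ0 : 0 < δ := by positivity
  have hcpt : IsCompact ((Set.Icc (-π) π) ×ˢ (Set.Icc (-π) π ∩ {u : ℝ | δ ≤ |u|})) :=
    isCompact_Icc.prod (isCompact_Icc.inter_right (isClosed_le continuous_const continuous_abs))
  have hkap : ∃ κ, 0 < κ ∧ ∀ t u, |u| ≤ π → δ ≤ |u| → κ ≤ ‖γ (t + u) - γ t‖ := by
    have hγ := L.smooth.continuous
    have hcont : Continuous (fun p : ℝ × ℝ => ‖γ (p.1 + p.2) - γ p.1‖) := by fun_prop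
    rcases Set.eq_empty_or_nonempty ((Set.Icc (-π) π) ×ˢ (Set.Icc (-π) π ∩ {u : ℝ | δ ≤ |u|}))
      with he | hne
    · refine ⟨1, one_pos, fun t u h1 h2 => ?_⟩
      have : ((0:ℝ), u) ∈ ((Set.Icc (-π) π) ×ˢ (Set.Icc (-π) π ∩ {u : ℝ | δ ≤ |u|})) :=
        ⟨⟨by simp; positivity, by simp; positivity⟩, abs_le.mp h1, h2⟩
      rw [he] at this; exact this.elim
    · obtain ⟨p, hp, hmin⟩ := hcpt.exists_isMinOn hne hcont.continuousOn
      refine ⟨‖γ (p.1 + p.2) - γ p.1‖, ?_, fun t u h1 h2 => ?_⟩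
      · rw [norm_pos_iff, sub_ne_zero]
        intro h
        have := L.inj_small (abs_le.mpr hp.2.1) h
        have h3 : δ ≤ |p.2| := hp.2.2
        rw [this, abs_zero] at h3
        linarith
      · obtain ⟨v, k, hv, hs⟩ := exists_rep 0 t
        rw [zero_add] at hs
        have := hmin (show (v, u) ∈ _ from ⟨abs_le.mp hv, abs_le.mp h1, h2⟩)
        have e : v + k * (2 * π) + u = v + u + k * (2 * π) := by ring
        rw [hs, e, per_int L.per, per_int L.per]
        exact this
  obtain ⟨κ, hκ, hκl⟩ := hkap
  refine ⟨min (m / 4) (κ / (2 * (π + 1))), by positivity, min 1 (κ / (2 * B)), by positivity, ?_⟩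
  intro t u ε hu hε
  by_cases hs : |u| ≤ δ
  · have h1 := norm_cross u ε (deriv γ t)
    have h2 := hT t u
    have h3 : M * |u| ≤ m / 4 := by
      calc M * |u| ≤ M * δ := by gcongr
        _ = m / 4 := by rw [hδ]; field_simp
    have h4 : ‖u * deriv γ t - ε * Complex.I * deriv γ t‖ ≤
        ‖γ (t + u) - γ t - ε * Complex.I * deriv γ t‖ + ‖γ (t + u) - γ t - u * deriv γ t‖ := by
      have := norm_sub_le (γ (t + u) - γ t - ε * Complex.I * deriv γ t)
        (γ (t + u) - γ t - u * deriv γ t)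
      convert this using 1
      congr 1
      ring
    have h5 : min (m / 4) (κ / (2 * (π + 1))) * (|u| + |ε|) ≤ m / 4 * (|u| + |ε|) := by
      gcongr; exact min_le_left _ _
    have h6 : m / 2 * (|u| + |ε|) ≤ ‖deriv γ t‖ / 2 * (|u| + |ε|) := by
      gcongr; exact hml t
    nlinarith [abs_nonneg u, abs_nonneg ε, mul_le_mul_of_nonneg_right h3 (abs_nonneg u)]
  · have h1 := hκl t u hu (not_le.mp hs).le
    have h2 : ‖(ε * Complex.I * deriv γ t : ℂ)‖ ≤ κ / 2 := by
      rw [norm_mul, norm_mul, Complex.norm_I, mul_one, Complex.norm_real, Real.norm_eq_abs]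
      calc |ε| * ‖deriv γ t‖ ≤ κ / (2 * B) * B := by
            gcongr
            · exact hε.trans (min_le_right _ _)
            · exact hBu t
        _ = κ / 2 := by field_simp
    have h3 := norm_sub_norm_le (γ (t + u) - γ t) (ε * Complex.I * deriv γ t)
    have h4 : min (m / 4) (κ / (2 * (π + 1))) * (|u| + |ε|) ≤ κ / (2 * (π + 1)) * (π + 1) := by
      gcongr
      · exact min_le_right _ _
      · exact hε.trans (min_le_left _ _)
    have h5 : κ / (2 * (π + 1)) * (π + 1) = κ / 2 := by field_simp
    linarith

/-- points near the curve, not on it, in normal coordinates -/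
lemma Loop.nearest {γ : ℝ → ℂ} (L : Loop γ) (z : ℂ) : ∃ t ε : ℝ,
    z = γ t + ε * Complex.I * deriv γ t ∧ ∀ s, ‖z - γ t‖ ≤ ‖z - γ s‖ := by
  have hγ := L.smooth.continuous
  obtain ⟨t, -, ht⟩ := (isCompact_Icc (a := -π) (b := π)).exists_isMinOn
    ⟨0, by constructor <;> linarith [pi_pos]⟩
    (f := fun t => ‖z - γ t‖) (by fun_prop)
  have hmin : ∀ s, ‖z - γ t‖ ≤ ‖z - γ s‖ := fun s => by
    obtain ⟨u, k, hu, hs⟩ := exists_rep 0 s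
    rw [hs, per_int L.per, zero_add]
    exact ht (abs_le.mp hu)
  have hd : HasDerivAt (fun s => ‖z - γ s‖ ^ 2) (2 * inner ℝ (z - γ t) (- deriv γ t)) t := by
    have := ((L.hasDeriv t).const_sub z).norm_sq
    exact this
  have h0 : IsLocalMin (fun s => ‖z - γ s‖ ^ 2) t := by
    refine Filter.Eventually.of_forall fun s => ?_
    have := hmin s
    show ‖z - γ t‖ ^ 2 ≤ ‖z - γ s‖ ^ 2
    gcongr
  have h1 := h0.hasDerivAt_eq_zero hd
  have h2 : ((z - γ t) / deriv γ t).re = 0 := by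
    rw [Complex.inner] at h1
    rw [Complex.div_re]
    simp only [map_sub, Complex.mul_re, Complex.sub_re, Complex.sub_im, Complex.neg_re,
      Complex.neg_im, Complex.conj_re, Complex.conj_im] at h1 ⊢
    rw [← add_div, div_eq_zero_iff]
    left
    linarith
  refine ⟨t, ((z - γ t) / deriv γ t).im, ?_, hmin⟩
  have h3 : ((((z - γ t) / deriv γ t).im : ℝ) : ℂ) * Complex.I = (z - γ t) / deriv γ t := by
    apply Complex.ext <;> simp [h2]
  rw [h3, div_mul_cancel₀ _ (L.reg t)]
  ring

noncomputable def Cau (γ h : ℝ → ℂ) (z : ℂ) : ℂ :=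
  ∫ t in (0:ℝ)..(2 * π), h t * deriv γ t / (γ t - z)

lemma Loop.dist_pos {γ : ℝ → ℂ} (L : Loop γ) {z : ℂ} (hz : z ∉ Set.range γ) :
    ∃ d, 0 < d ∧ ∀ t, d ≤ ‖γ t - z‖ := by
  obtain ⟨t, ε, h, hm⟩ := L.nearest z
  refine ⟨‖z - γ t‖, ?_, fun s => ?_⟩
  · rw [norm_pos_iff, sub_ne_zero]; rintro rfl; exact hz ⟨t, rfl⟩
  · rw [norm_sub_rev (γ s)]; exact hm s

lemma Loop.cau_deriv {γ h : ℝ → ℂ} (L : Loop γ) (hc : Continuous h) 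
    {z : ℂ} (hz : z ∉ Set.range γ) :
    HasDerivAt (Cau γ h) (∫ t in (0:ℝ)..(2 * π), h t * deriv γ t / (γ t - z) ^ 2) z := by
  obtain ⟨d, hd, hdl⟩ := L.dist_pos hz
  have hγ := L.smooth.continuous
  have hγ' := L.d_cont
  have hcn : Continuous (fun t => h t * deriv γ t) := by fun_prop
  obtain ⟨C, hC⟩ := (isCompact_uIcc (a := (0:ℝ)) (b := 2 * π)).exists_bound_of_continuousOn
    hcn.continuousOn
  have hne : ∀ w ∈ Metric.ball z (d / 2), ∀ t, d / 2 ≤ ‖γ t - w‖ := fun w hw t => by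
    have h1 := hdl t
    rw [Metric.mem_ball, dist_eq_norm] at hw
    have := norm_add_le (γ t - w) (w - z)
    rw [sub_add_sub_cancel] at this
    linarith
  have hne' : ∀ w ∈ Metric.ball z (d / 2), ∀ t, γ t - w ≠ 0 := fun w hw t h0 => by
    have := hne w hw t
    rw [h0, norm_zero] at this; linarith
  have hzb : z ∈ Metric.ball z (d / 2) := Metric.mem_ball_self (by positivity)
  have hcont : ∀ w ∈ Metric.ball z (d / 2), Continuous fun t => h t * deriv γ t / (γ t - w) :=
    fun w hw => hcn.div (by fun_prop) (hne' w hw)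
  have hcont2 : Continuous fun t => h t * deriv γ t / (γ t - z) ^ 2 :=
    hcn.div (by fun_prop) (fun t => pow_ne_zero 2 (hne' z hzb t))
  refine (intervalIntegral.hasDerivAt_integral_of_dominated_loc_of_deriv_le
    (μ := MeasureTheory.volume) (s := Metric.ball z (d / 2)) (bound := fun _ => C / (d / 2) ^ 2)
    (F := fun w t => h t * deriv γ t / (γ t - w))
    (F' := fun w t => h t * deriv γ t / (γ t - w) ^ 2) 
    (Metric.ball_mem_nhds _ (by positivity)) ?_ ((hcont z hzb).intervalIntegrable _ _)
    hcont2.aestronglyMeasurable ?_ intervalIntegrable_const ?_).2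
  · filter_upwards [Metric.ball_mem_nhds z (show 0 < d / 2 by positivity)] with w hw
    exact (hcont w hw).aestronglyMeasurable
  · refine Filter.Eventually.of_forall fun t ht w hw => ?_
    rw [norm_div, norm_pow]
    have := hC t (Set.uIoc_subset_uIcc ht)
    have h0 := (norm_nonneg _).trans this
    gcongr
    exact hne w hw t
  · refine Filter.Eventually.of_forall fun t ht w hw => ?_
    have h1 : HasDerivAt (fun w => γ t - w) (-1) w := by
      simpa using (hasDerivAt_id w).const_sub (γ t)
    have h2 := (h1.inv (hne' w hw t)).const_mul (h t * deriv γ t)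
    have e : h t * deriv γ t / (γ t - w) ^ 2 = h t * deriv γ t * (-(-1) / (γ t - w) ^ 2) := by ring
    rw [e]
    exact h2

lemma Loop.cau_one_deriv {γ : ℝ → ℂ} (L : Loop γ) {z : ℂ} (hz : z ∉ Set.range γ) :
    HasDerivAt (Cau γ (fun _ => 1)) 0 z := by
  have h := L.cau_deriv (h := fun _ => 1) continuous_const hz
  have hne : ∀ t, γ t - z ≠ 0 := fun t h0 => hz ⟨t, sub_eq_zero.mp h0⟩
  convert h using 1
  have hγ := L.smooth.continuous
  have hγ' := L.d_cont
  have hcont2 : Continuous fun t => 1 * deriv γ t / (γ t - z) ^ 2 :=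
    Continuous.div (by fun_prop) (by fun_prop) (fun t => pow_ne_zero 2 (hne t))
  rw [intervalIntegral.integral_eq_sub_of_hasDerivAt (f := fun t => - (γ t - z)⁻¹)]
  · have := L.per 0
    rw [zero_add] at this
    rw [this]; ring
  · intro t _
    have := (((L.hasDeriv t).sub_const z).inv (hne t)).neg
    have e : 1 * deriv γ t / (γ t - z) ^ 2 = -(-deriv γ t / (γ t - z) ^ 2) := by ring
    rw [e]
    exact this
  · exact hcont2.intervalIntegrable _ _

lemma Loop.cau_far {γ h : ℝ → ℂ} (L : Loop γ) (hc : Continuous h) 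
    (hmom : ∀ k : ℕ, ∫ t in (0:ℝ)..(2 * π), (γ t) ^ k * h t * deriv γ t = 0)
    {R : ℝ} (hR : ∀ t, ‖γ t‖ ≤ R) {z : ℂ} (hz : R < ‖z‖) : Cau γ h z = 0 := by
  have hγ := L.smooth.continuous
  have hγ' := L.d_cont
  have hne : ∀ t, γ t - z ≠ 0 := fun t h0 => by
    have := hR t
    rw [sub_eq_zero.mp h0] at this; linarith
  have hR0 : 0 ≤ R := (norm_nonneg _).trans (hR 0)
  have hz0 : z ≠ 0 := by rintro rfl; rw [norm_zero] at hz; linarith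
  have hcn : Continuous (fun t => h t * deriv γ t / (γ t - z)) :=
    Continuous.div (by fun_prop) (by fun_prop) hne
  have hN : ∀ N : ℕ, Cau γ h z =
      ∫ t in (0:ℝ)..(2 * π), (γ t / z) ^ N * (h t * deriv γ t / (γ t - z)) := by
    intro N
    induction N with
    | zero => simp [Cau]
    | succ N ih =>
      rw [ih]
      have e : ∀ t, (γ t / z) ^ N * (h t * deriv γ t / (γ t - z)) =
          (γ t / z) ^ (N + 1) * (h t * deriv γ t / (γ t - z))
            - (1 / z ^ (N + 1)) * ((γ t) ^ N * h t * deriv γ t) := fun t => by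
        have := hne t
        rw [div_pow, div_pow]
        field_simp
        ring
      simp_rw [e]
      rw [intervalIntegral.integral_sub, intervalIntegral.integral_const_mul, hmom N]
      · simp
      · exact Continuous.intervalIntegrable (by fun_prop) _ _
      · exact Continuous.intervalIntegrable (by fun_prop) _ _
  obtain ⟨C, hC⟩ := (isCompact_uIcc (a := (0:ℝ)) (b := 2 * π)).exists_bound_of_continuousOn
    hcn.continuousOn
  have hb : ∀ N : ℕ, ‖Cau γ h z‖ ≤ (R / ‖z‖) ^ N * C * |2 * π - 0| := fun N => by
    rw [hN N]
    refine intervalIntegral.norm_integral_le_of_norm_le_const fun t ht => ?_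
    rw [norm_mul, norm_pow, norm_div]
    gcongr
    · exact hR t
    · exact hC t (Set.uIoc_subset_uIcc ht)
  have hlim : Filter.Tendsto (fun N : ℕ => (R / ‖z‖) ^ N * C * |2 * π - 0|) Filter.atTop
      (nhds (0 * C * |2 * π - 0|)) := by
    refine Filter.Tendsto.mul_const _ (Filter.Tendsto.mul_const _ ?_)
    exact tendsto_pow_atTop_nhds_zero_of_lt_one (by positivity)
      ((div_lt_one (by linarith)).mpr hz)
  have := ge_of_tendsto' hlim hb
  simpa using this

noncomputable def psi (ε : ℝ) : ℝ := ∫ u in (-π)..π, ε / (|u| + ε)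

lemma psi_tendsto : Filter.Tendsto psi (nhdsWithin 0 (Set.Ioi 0)) (nhds 0) := by
  have h0 : (0:ℝ) = ∫ u in (-π)..π, (0:ℝ) := by simp
  suffices h : Filter.Tendsto psi (nhdsWithin 0 (Set.Ioi 0)) (nhds (∫ u in (-π)..π, (0:ℝ))) by
    rwa [← h0] at h
  unfold psi
  refine intervalIntegral.tendsto_integral_filter_of_dominated_convergence (fun _ => 1) ?_ ?_
    intervalIntegrable_const ?_
  · filter_upwards [self_mem_nhdsWithin] with ε hε
    have : (0:ℝ) < ε := hε
    exact (Continuous.div (by fun_prop) (by fun_prop)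
      (fun u => by positivity)).aestronglyMeasurable
  · filter_upwards [self_mem_nhdsWithin] with ε hε
    have : (0:ℝ) < ε := hε
    refine Filter.Eventually.of_forall fun u _ => ?_
    rw [Real.norm_eq_abs, abs_of_nonneg (by positivity), div_le_one (by positivity)]
    linarith [abs_nonneg u]
  · have : ∀ᵐ u : ℝ, u ≠ 0 := by
      simp [MeasureTheory.ae_iff]
    filter_upwards [this] with u hu _
    have hu' : |u| ≠ 0 := abs_ne_zero.mpr hu
    have : ContinuousAt (fun ε : ℝ => ε / (|u| + ε)) 0 := by
      refine ContinuousAt.div (by fun_prop) (by fun_prop) (by simpa using hu)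
    have h2 := this.tendsto
    simp only [zero_div] at h2
    exact h2.mono_left nhdsWithin_le_nhds

lemma shift {F : ℝ → ℂ} (hF : Function.Periodic F (2 * π)) (t : ℝ) :
    ∫ s in (0:ℝ)..(2 * π), F s = ∫ u in (-π)..π, F (t + u) := by
  rw [intervalIntegral.integral_comp_add_left]
  have := hF.intervalIntegral_add_eq 0 (t + -π)
  rw [zero_add] at this
  rw [this]; congr 1; ring

lemma Loop.nmem {γ : ℝ → ℂ} (L : Loop γ) {c ε₀ : ℝ} (hc : 0 < c) (H : ∀ t u ε : ℝ,
    |u| ≤ π → |ε| ≤ ε₀ → c * (|u| + |ε|) ≤ ‖γ (t + u) - γ t - ε * Complex.I * deriv γ t‖)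
    (t ε : ℝ) (h0 : ε ≠ 0) (hε : |ε| ≤ ε₀) : γ t + ε * Complex.I * deriv γ t ∉ Set.range γ := by
  rintro ⟨s, hs⟩
  obtain ⟨u, k, hu, hs'⟩ := exists_rep t s
  have := H t u ε hu hε
  rw [hs', per_int L.per] at hs
  rw [hs, add_sub_cancel_left, sub_self, norm_zero] at this
  have h1 : 0 < |ε| := abs_pos.mpr h0
  have := abs_nonneg u
  nlinarith

lemma Loop.key {γ h : ℝ → ℂ} (L : Loop γ) (hh : ContDiff ℝ 1 h) (hp : Function.Periodic h (2 * π))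
    {c ε₀ : ℝ} (hc : 0 < c) (H : ∀ t u ε : ℝ,
    |u| ≤ π → |ε| ≤ ε₀ → c * (|u| + |ε|) ≤ ‖γ (t + u) - γ t - ε * Complex.I * deriv γ t‖) :
    ∃ C, 0 < C ∧ ∀ t ε : ℝ, ε ≠ 0 → |ε| ≤ ε₀ → 
      ‖(Cau γ h (γ t + ε * Complex.I * deriv γ t)
          - h t * Cau γ (fun _ => 1) (γ t + ε * Complex.I * deriv γ t))
        - (Cau γ h (γ t + (-ε : ℝ) * Complex.I * deriv γ t)
          - h t * Cau γ (fun _ => 1) (γ t + (-ε : ℝ) * Complex.I * deriv γ t))‖ ≤ C * psi |ε| := by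
  have hγ := L.smooth.continuous
  have hγ' := L.d_cont
  have hhc := hh.continuous
  obtain ⟨K, hK, hKl⟩ := per_lip hh hp
  obtain ⟨B, hB, hBu⟩ := per_bound L.d_cont (per_deriv L.per)
  refine ⟨2 * K * B * B / c ^ 2, by positivity, fun t ε h0 hε => ?_⟩
  set z := γ t + ε * Complex.I * deriv γ t with hz
  set w := γ t + (-ε : ℝ) * Complex.I * deriv γ t with hw
  have hzr : z ∉ Set.range γ := L.nmem hc H t ε h0 hε
  have hwr : w ∉ Set.range γ := L.nmem hc H t (-ε) (neg_ne_zero.mpr h0) (by rwa [abs_neg])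
  have zne : ∀ s, γ s - z ≠ 0 := fun s h0 => hzr ⟨s, sub_eq_zero.mp h0⟩
  have wne : ∀ s, γ s - w ≠ 0 := fun s h0 => hwr ⟨s, sub_eq_zero.mp h0⟩
  have comb : ∀ v, (∀ s, γ s - v ≠ 0) → Cau γ h v - h t * Cau γ (fun _ => 1) v =
      ∫ s in (0:ℝ)..(2 * π), (h s - h t) * deriv γ s / (γ s - v) := fun v hv => by
    unfold Cau
    have c0 : Continuous fun s => (γ s - v)⁻¹ := Continuous.inv₀ (by fun_prop) hv
    rw [← intervalIntegral.integral_const_mul, ← intervalIntegral.integral_sub]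
    · congr 1; ext s; ring
    · simp_rw [div_eq_mul_inv]
      exact Continuous.intervalIntegrable (by fun_prop) _ _
    · simp_rw [div_eq_mul_inv]
      exact Continuous.intervalIntegrable (by fun_prop) _ _
  rw [comb z zne, comb w wne, ← intervalIntegral.integral_sub]
  rotate_left
  · exact (Continuous.div (by fun_prop) (by fun_prop) zne).intervalIntegrable _ _
  · exact (Continuous.div (by fun_prop) (by fun_prop) wne).intervalIntegrable _ _
  rw [shift (t := t)]
  rotate_left
  · intro s
    simp only [hp s, L.per s, per_deriv L.per s]
  have ha : 0 < |ε| := abs_pos.mpr h0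
  unfold psi
  rw [← intervalIntegral.integral_const_mul]
  refine intervalIntegral.norm_integral_le_of_norm_le (by linarith [pi_pos]) 
    (Filter.Eventually.of_forall fun u hu => ?_) ?_
  · have hu' : |u| ≤ π := abs_le.mpr ⟨hu.1.le, hu.2⟩
    have h1 : c * (|u| + |ε|) ≤ ‖γ (t + u) - z‖ := by
      have := H t u ε hu' hε
      rwa [sub_sub] at this
    have h2 : c * (|u| + |ε|) ≤ ‖γ (t + u) - w‖ := by
      have := H t u (-ε) hu' (by rwa [abs_neg])
      rwa [sub_sub, abs_neg] at this
    have e : (h (t + u) - h t) * deriv γ (t + u) / (γ (t + u) - z)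
        - (h (t + u) - h t) * deriv γ (t + u) / (γ (t + u) - w) =
        (h (t + u) - h t) * deriv γ (t + u) * (z - w) / ((γ (t + u) - z) * (γ (t + u) - w)) := by
      have := zne (t + u); have := wne (t + u)
      field_simp
      ring
    have h3 : ‖z - w‖ ≤ 2 * |ε| * B := by
      have : z - w = (2 * ε : ℝ) * Complex.I * deriv γ t := by
        rw [hz, hw]; push_cast; ring
      rw [this, norm_mul, norm_mul, Complex.norm_I, mul_one, Complex.norm_real, Real.norm_eq_abs,
        abs_mul, abs_two]
      gcongr
      exact hBu t
    have h4 : ‖h (t + u) - h t‖ ≤ K * |u| := by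
      have := hKl t (t + u)
      rwa [add_sub_cancel_left] at this
    rw [e, norm_div, norm_mul, norm_mul, norm_mul]
    have hpos : 0 < c * (|u| + |ε|) := by positivity
    calc _ ≤ (K * |u|) * B * (2 * |ε| * B) / ((c * (|u| + |ε|)) * (c * (|u| + |ε|))) := by
          gcongr
          exact hBu _
      _ ≤ (K * (|u| + |ε|)) * B * (2 * |ε| * B) / ((c * (|u| + |ε|)) * (c * (|u| + |ε|))) := by
          gcongr
          linarith
      _ = _ := by field_simp
  · exact (Continuous.mul continuous_const (Continuous.div (by fun_prop) (by fun_prop)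
      (fun u => by positivity))).intervalIntegrable _ _

lemma near_alg (u ε : ℝ) (a b : ℂ) (hε : 0 < ε) (ha : ‖a‖ ≤ |u| / 10) (hb : ‖b‖ ≤ 1 / 10) :
    1 / (2 * (u ^ 2 + ε ^ 2)) ≤ ((1 + b) / ((u + a) ^ 2 + ε ^ 2)).re := by
  set S : ℝ := u ^ 2 + ε ^ 2 with hS
  have hS0 : 0 < S := by positivity
  have hSc : (S : ℂ) = u ^ 2 + ε ^ 2 := by rw [hS]; push_cast; ring
  set Q : ℂ := (u + a) ^ 2 + ε ^ 2 with hQ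
  have hu2 : |u| * |u| ≤ S := by
    rw [abs_mul_abs_self u, hS]; nlinarith [sq_nonneg ε]
  have e1 : Q - S = a * (2 * u + a) := by rw [hQ, hSc]; ring
  have n1 : ‖Q - S‖ ≤ 21 / 100 * S := by
    rw [e1, norm_mul]
    have : ‖(2 * u + a : ℂ)‖ ≤ 21 / 10 * |u| := by
      refine (norm_add_le _ _).trans ?_
      rw [norm_mul, Complex.norm_real, Real.norm_eq_abs]
      norm_num
      linarith
    calc ‖a‖ * ‖(2 * u + a : ℂ)‖ ≤ (|u| / 10) * (21 / 10 * |u|) := by gcongr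
      _ ≤ 21 / 100 * S := by linarith
  have nS : ‖(S : ℂ)‖ = S := by rw [Complex.norm_real, Real.norm_eq_abs, abs_of_pos hS0]
  have n2 : 79 / 100 * S ≤ ‖Q‖ := by
    have := norm_sub_norm_le (S : ℂ) ((S : ℂ) - Q)
    rw [sub_sub_cancel, norm_sub_rev, nS] at this
    linarith
  have hQ0 : Q ≠ 0 := by rw [← norm_pos_iff]; nlinarith
  have hSc0 : (S : ℂ) ≠ 0 := by exact_mod_cast hS0.ne'
  have e2 : (1 + b) / Q - 1 / S = (b * S - (Q - S)) / (Q * S) := by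
    field_simp; ring
  have n3 : ‖(1 + b) / Q - 1 / S‖ ≤ 1 / (2 * S) := by
    rw [e2, norm_div, norm_mul, nS]
    have : ‖b * S - (Q - S)‖ ≤ 31 / 100 * S := by
      refine (norm_sub_le _ _).trans ?_
      rw [norm_mul, nS]
      nlinarith
    calc _ ≤ (31 / 100 * S) / ((79 / 100 * S) * S) := by gcongr
      _ = (31 / 79) / S := by field_simp
      _ ≤ (1 / 2) / S := div_le_div_of_nonneg_right (by norm_num) hS0.le
      _ = _ := by field_simp
  have h4 := (abs_le.mp ((Complex.abs_re_le_norm _).trans n3)).1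
  have h5 : ((1 : ℂ) / S).re = 1 / S := by
    rw [show (1 : ℂ) / S = ((1 / S : ℝ) : ℂ) by push_cast; rfl, Complex.ofReal_re]
  rw [Complex.sub_re, h5] at h4
  have h6 : 1 / S = 1 / (2 * S) + 1 / (2 * S) := by field_simp; norm_num
  linarith

lemma Loop.jump {γ : ℝ → ℂ} (L : Loop γ) 
    {c ε₀ : ℝ} (hc : 0 < c) (hε₀ : 0 < ε₀) (H : ∀ t u ε : ℝ,
    |u| ≤ π → |ε| ≤ ε₀ → c * (|u| + |ε|) ≤ ‖γ (t + u) - γ t - ε * Complex.I * deriv γ t‖)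
    (t : ℝ) : ∃ ε, 0 < ε ∧ ε ≤ ε₀ ∧ Cau γ (fun _ => 1) (γ t + ε * Complex.I * deriv γ t)
      ≠ Cau γ (fun _ => 1) (γ t + (-ε : ℝ) * Complex.I * deriv γ t) := by
  have hγ := L.smooth.continuous
  have hγ' := L.d_cont
  obtain ⟨M, hM, hT, hT'⟩ := L.taylor
  obtain ⟨B, hB, hBu⟩ := per_bound L.d_cont (per_deriv L.per)
  have hr : 0 < ‖deriv γ t‖ := norm_pos_iff.mpr (L.reg t)
  set δ := ‖deriv γ t‖ / (10 * M) with hδ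
  have hδ0 : 0 < δ := by positivity
  set A := B * B / (c ^ 2 * δ ^ 2) with hA
  have hA0 : 0 < A := by positivity
  set ε := min (min ε₀ δ) (min 1 (1 / (8 * π * A))) with hεd
  have hε : 0 < ε := by positivity
  have l1 : ε ≤ ε₀ := (min_le_left _ _).trans (min_le_left _ _)
  have l2 : ε ≤ δ := (min_le_left _ _).trans (min_le_right _ _)
  have l3 : ε ≤ 1 := (min_le_right _ _).trans (min_le_left _ _)
  have l4 : ε ≤ 1 / (8 * π * A) := (min_le_right _ _).trans (min_le_right _ _)
  clear_value ε
  refine ⟨ε, hε, l1, fun heq => ?_⟩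
  have hεa : |ε| = ε := abs_of_pos hε
  set z := γ t + ε * Complex.I * deriv γ t with hz
  set w := γ t + (-ε : ℝ) * Complex.I * deriv γ t with hw
  have hzr : z ∉ Set.range γ := L.nmem hc H t ε hε.ne' (hεa.trans_le l1)
  have hwr : w ∉ Set.range γ := L.nmem hc H t (-ε) (neg_ne_zero.mpr hε.ne') (by rwa [abs_neg, hεa])
  have zne : ∀ s, γ s - z ≠ 0 := fun s h0 => hzr ⟨s, sub_eq_zero.mp h0⟩
  have wne : ∀ s, γ s - w ≠ 0 := fun s h0 => hwr ⟨s, sub_eq_zero.mp h0⟩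
  set q : ℝ → ℂ := fun u => ε * deriv γ t * deriv γ (t + u)
    / ((γ (t + u) - z) * (γ (t + u) - w)) with hq
  have qc : Continuous q := Continuous.div (by fun_prop) (by fun_prop)
    (fun u => mul_ne_zero (zne _) (wne _))
  have hint : ∫ u in (-π)..π, q u = 0 := by
    have h1 := sub_eq_zero.mpr heq
    unfold Cau at h1
    rw [← intervalIntegral.integral_sub, shift (t := t)] at h1
    rotate_left
    · intro s
      simp only [L.per s, per_deriv L.per s]
    · exact (Continuous.div (by fun_prop) (by fun_prop) zne).intervalIntegrable _ _
    · exact (Continuous.div (by fun_prop) (by fun_prop) wne).intervalIntegrable _ _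
    have e : ∀ u, 1 * deriv γ (t + u) / (γ (t + u) - z) - 1 * deriv γ (t + u) / (γ (t + u) - w)
        = (2 * Complex.I) * q u := fun u => by
      have h1 := zne (t + u); have h2 := wne (t + u)
      have h3 : z - w = 2 * Complex.I * ε * deriv γ t := by
        rw [hz, hw]; push_cast; ring
      have h4 : (2 * Complex.I) * q u = (z - w) * deriv γ (t + u)
          / ((γ (t + u) - z) * (γ (t + u) - w)) := by
        rw [hq, h3]; ring
      rw [h4]
      clear_value z w
      field_simp
      ring
    simp_rw [e] at h1
    rw [intervalIntegral.integral_const_mul] at h1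
    simpa using h1
  have hre : ∫ u in (-π)..π, (q u).re = 0 := by
    have := Complex.reCLM.intervalIntegral_comp_comm 
      (qc.intervalIntegrable (μ := MeasureTheory.volume) (-π) π)
    simp only [Complex.reCLM_apply] at this
    rw [this, hint, Complex.zero_re]
  have rc : Continuous fun u => (q u).re := by fun_prop
  have near : ∀ u, |u| ≤ δ → ε / (2 * (u ^ 2 + ε ^ 2)) ≤ (q u).re := fun u hu => by
    have hd0 := L.reg t
    set a := (γ (t + u) - γ t - u * deriv γ t) / deriv γ t with ha
    set b := (deriv γ (t + u) - deriv γ t) / deriv γ t with hb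
    have hMu : M * |u| ≤ ‖deriv γ t‖ / 10 := by
      calc M * |u| ≤ M * δ := by gcongr
        _ = ‖deriv γ t‖ / 10 := by rw [hδ]; field_simp
    have na : ‖a‖ ≤ |u| / 10 := by
      rw [ha, norm_div, div_le_iff₀ hr]
      refine (hT t u).trans ?_
      nlinarith [abs_nonneg u]
    have nb : ‖b‖ ≤ 1 / 10 := by
      rw [hb, norm_div, div_le_iff₀ hr]
      refine (hT' t (t + u)).trans ?_
      rw [add_sub_cancel_left]; linarith
    have h1 := near_alg u ε a b hε na nb
    have e1 : γ (t + u) - z = (u + a - ε * Complex.I) * deriv γ t := by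
      rw [ha, hz]; field_simp; ring
    have e2 : γ (t + u) - w = (u + a + ε * Complex.I) * deriv γ t := by
      rw [ha, hw]; push_cast; field_simp; ring
    have e3 : deriv γ (t + u) = (1 + b) * deriv γ t := by
      rw [hb]; field_simp; ring
    have e4 : q u = (ε : ℂ) * ((1 + b) / ((u + a) ^ 2 + ε ^ 2)) := by
      have : (u + a) ^ 2 + (ε : ℂ) ^ 2 = (u + a - ε * Complex.I) * (u + a + ε * Complex.I) := by
        ring_nf; rw [Complex.I_sq]; ring
      rw [this]
      simp only [hq]
      rw [e1, e2, e3]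
      rw [show (ε : ℂ) * deriv γ t * ((1 + b) * deriv γ t) = (ε * (1 + b)) * (deriv γ t * deriv γ t) by ring,
        show (u + a - ε * Complex.I) * deriv γ t * ((u + a + ε * Complex.I) * deriv γ t) = 
        ((u + a - ε * Complex.I) * (u + a + ε * Complex.I)) * (deriv γ t * deriv γ t) by ring,
        mul_div_mul_right _ _ (mul_ne_zero hd0 hd0), mul_div_assoc]
    rw [e4, Complex.re_ofReal_mul]
    calc _ = ε * (1 / (2 * (u ^ 2 + ε ^ 2))) := by ring
      _ ≤ _ := by gcongr
  have all : ∀ u, |u| ≤ π → - (ε * A) ≤ (q u).re := fun u hu => by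
    by_cases hs : |u| ≤ δ
    · refine le_trans ?_ (near u hs)
      have : 0 ≤ ε / (2 * (u ^ 2 + ε ^ 2)) := by positivity
      have : 0 < ε * A := by positivity
      linarith
    · have hs' := (not_le.mp hs).le
      have h1 : c * δ ≤ ‖γ (t + u) - z‖ := by
        have := H t u ε hu (hεa.trans_le l1)
        rw [sub_sub] at this
        refine le_trans ?_ this
        gcongr
        linarith [abs_nonneg ε]
      have h2 : c * δ ≤ ‖γ (t + u) - w‖ := by
        have := H t u (-ε) hu (by rwa [abs_neg, hεa])
        rw [sub_sub] at this
        refine le_trans ?_ this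
        gcongr
        linarith [abs_nonneg (-ε)]
      have h3 : ‖q u‖ ≤ ε * A := by
        simp only [hq]
        rw [norm_div, norm_mul, norm_mul, norm_mul, Complex.norm_real, Real.norm_eq_abs, hεa]
        calc _ ≤ ε * B * B / ((c * δ) * (c * δ)) := by
              gcongr
              · exact hBu _
              · exact hBu _
          _ = ε * A := by rw [hA]; field_simp
      exact (abs_le.mp ((Complex.abs_re_le_norm _).trans h3)).1
  have mid : ∀ u, |u| ≤ ε → 1 / (4 * ε) ≤ (q u).re := fun u hu => by
    refine le_trans ?_ (near u (hu.trans l2))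
    have : u ^ 2 ≤ ε ^ 2 := by rw [← sq_abs u]; gcongr
    rw [div_le_div_iff₀ (by positivity) (by positivity)]
    nlinarith
  have hπ : 3 < π := pi_gt_three
  rw [← intervalIntegral.integral_add_adjacent_intervals (b := ε) (rc.intervalIntegrable _ _)
    (rc.intervalIntegrable _ _),
    ← intervalIntegral.integral_add_adjacent_intervals (b := -ε) (rc.intervalIntegrable _ _)
    (rc.intervalIntegrable _ _)] at hre
  have i1 : ∫ u in (-π)..(-ε), (-(ε * A)) ≤ ∫ u in (-π)..(-ε), (q u).re := by
    refine intervalIntegral.integral_mono_on (by linarith) intervalIntegrable_const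
      (rc.intervalIntegrable _ _) fun u hu => all u (abs_le.mpr ⟨hu.1, ?_⟩)
    linarith [hu.2]
  have i2 : ∫ u in (-ε)..ε, (1 / (4 * ε)) ≤ ∫ u in (-ε)..ε, (q u).re := by
    exact intervalIntegral.integral_mono_on (by linarith) intervalIntegrable_const
      (rc.intervalIntegrable _ _) fun u hu => mid u (abs_le.mpr hu)
  have i3 : ∫ u in ε..π, (-(ε * A)) ≤ ∫ u in ε..π, (q u).re := by
    refine intervalIntegral.integral_mono_on (by linarith) intervalIntegrable_const
      (rc.intervalIntegrable _ _) fun u hu => all u (abs_le.mpr ⟨?_, hu.2⟩)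
    linarith [hu.1]
  rw [intervalIntegral.integral_const, smul_eq_mul] at i1 i2 i3
  have e2 : (ε - -ε) * (1 / (4 * ε)) = 1 / 2 := by field_simp; norm_num
  have e3 : ε * (π * A) ≤ 1 / 8 := by
    calc ε * (π * A) ≤ 1 / (8 * π * A) * (π * A) := by gcongr
      _ = 1 / 8 := by field_simp
  rw [e2] at i2
  have : 0 < ε * (ε * A) := by positivity
  nlinarith

lemma sub_of_frontier {N V F : Set ℂ} (hN : IsPreconnected N) (hV : IsOpen V)
    (hF : frontier V ⊆ F) (hNF : Disjoint N F) (hne : (N ∩ V).Nonempty) : N ⊆ V := by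
  refine hN.subset_of_closure_inter_subset hV hne ?_
  rintro x ⟨hx, hxN⟩
  by_contra hxV
  refine Set.disjoint_left.mp hNF hxN (hF ?_)
  rw [hV.frontier_eq]
  exact ⟨hx, hxV⟩

def side (γ : ℝ → ℂ) (ε₀ σ : ℝ) : Set ℂ :=
  (fun p : ℝ × ℝ => γ p.1 + (σ * p.2 : ℝ) * Complex.I * deriv γ p.1) ''
    (Set.univ ×ˢ Set.Ioc 0 ε₀)

lemma Loop.side_pre {γ : ℝ → ℂ} (L : Loop γ) (ε₀ σ : ℝ) : IsPreconnected (side γ ε₀ σ) := by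
  have hγ := L.smooth.continuous
  have hγ' := L.d_cont
  refine (isPreconnected_univ.prod isPreconnected_Ioc).image _ (Continuous.continuousOn ?_)
  fun_prop

lemma Loop.side_disj {γ : ℝ → ℂ} (L : Loop γ) {c ε₀ : ℝ} (hc : 0 < c) (H : ∀ t u ε : ℝ,
    |u| ≤ π → |ε| ≤ ε₀ → c * (|u| + |ε|) ≤ ‖γ (t + u) - γ t - ε * Complex.I * deriv γ t‖)
    {σ : ℝ} (hσ : σ = 1 ∨ σ = -1) : Disjoint (side γ ε₀ σ) (Set.range γ) := by
  rw [Set.disjoint_left]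
  rintro _ ⟨⟨t, ε⟩, ⟨-, h1, h2⟩, rfl⟩
  have ha : |σ| = 1 := by rcases hσ with rfl | rfl <;> simp
  refine L.nmem hc H t (σ * ε) (mul_ne_zero ?_ h1.ne') ?_
  · rintro rfl; simp at ha
  · rw [abs_mul, ha, one_mul, abs_of_pos h1]; exact h2

lemma Loop.side_meets {γ : ℝ → ℂ} (L : Loop γ) {ε₀ : ℝ} (hε₀ : 0 < ε₀) 
    {V : Set ℂ} (hVd : Disjoint V (Set.range γ)) (hne : (frontier V).Nonempty)
    (hF : frontier V ⊆ Set.range γ) :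
    ∃ σ : ℝ, (σ = 1 ∨ σ = -1) ∧ (side γ ε₀ σ ∩ V).Nonempty := by
  obtain ⟨m, hm, hml⟩ := L.d_lower
  obtain ⟨p, hp⟩ := hne
  obtain ⟨s, rfl⟩ := hF hp
  obtain ⟨z, hzV, hz⟩ := Metric.mem_closure_iff.mp hp.1 (m * ε₀) (by positivity)
  obtain ⟨t, ε, hzt, hmin⟩ := L.nearest z
  have h1 := hmin s
  rw [dist_eq_norm, norm_sub_rev] at hz
  have h2 : ‖z - γ t‖ = |ε| * ‖deriv γ t‖ := by
    rw [hzt, add_sub_cancel_left, norm_mul, norm_mul, Complex.norm_I, mul_one, Complex.norm_real,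
      Real.norm_eq_abs]
  have h3 : |ε| * m ≤ |ε| * ‖deriv γ t‖ := by gcongr; exact hml t
  have h4 : |ε| ≤ ε₀ := by
    by_contra hcon
    push Not at hcon
    nlinarith
  have h5 : ε ≠ 0 := by
    rintro rfl
    refine Set.disjoint_left.mp hVd hzV ⟨t, ?_⟩
    rw [hzt]; simp
  rcases lt_or_gt_of_ne h5 with hneg | hpos
  · refine ⟨-1, Or.inr rfl, z, ⟨(t, -ε), ⟨trivial, by simpa using hneg, ?_⟩, ?_⟩, hzV⟩
    · rw [abs_of_neg hneg] at h4; exact h4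
    · rw [hzt]; simp
  · refine ⟨1, Or.inl rfl, z, ⟨(t, ε), ⟨trivial, hpos, ?_⟩, ?_⟩, hzV⟩
    · rw [abs_of_pos hpos] at h4; exact h4
    · rw [hzt]; simp

lemma Loop.topo {γ : ℝ → ℂ} (L : Loop γ) {c ε₀ : ℝ} (hc : 0 < c) (hε₀ : 0 < ε₀)
    (H : ∀ t u ε : ℝ,
    |u| ≤ π → |ε| ≤ ε₀ → c * (|u| + |ε|) ≤ ‖γ (t + u) - γ t - ε * Complex.I * deriv γ t‖)
    {D : Set ℂ} (hD : IsOpen D) (hfr : frontier D = Set.range γ) {z₀ : ℂ} (hz₀ : z₀ ∉ D)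
    (hz₀' : z₀ ∉ Set.range γ) :
    ∃ E : Set ℂ, IsOpen E ∧ IsPreconnected E ∧ z₀ ∈ E ∧ E ⊆ (Set.range γ)ᶜ ∧ Disjoint D E ∧
      ∃ σ : ℝ, (σ = 1 ∨ σ = -1) ∧ side γ ε₀ σ ⊆ D ∧ side γ ε₀ (-σ) ⊆ E := by
  have hcl : IsClosed (Set.range γ) := hfr ▸ isClosed_frontier
  have hop : IsOpen (Set.range γ)ᶜ := hcl.isOpen_compl
  set E := connectedComponentIn (Set.range γ)ᶜ z₀ with hE
  have hEo : IsOpen E := hop.connectedComponentIn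
  have hEp : IsPreconnected E := isPreconnected_connectedComponentIn
  have hzE : z₀ ∈ E := mem_connectedComponentIn hz₀'
  have hEs : E ⊆ (Set.range γ)ᶜ := connectedComponentIn_subset _ _
  have hEd : Disjoint E (Set.range γ) := Set.disjoint_left.mpr hEs
  have hDd : Disjoint D (Set.range γ) := by
    rw [← hfr, hD.frontier_eq]; exact Set.disjoint_sdiff_right
  have hEf : frontier E ⊆ Set.range γ := by
    intro p hp
    by_contra hpn
    have h1 : IsOpen (connectedComponentIn (Set.range γ)ᶜ p) := hop.connectedComponentIn
    obtain ⟨y, hy1, hy2⟩ := mem_closure_iff.mp hp.1 _ h1 (mem_connectedComponentIn hpn)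
    have h2 := connectedComponentIn_eq hy1
    have h3 := connectedComponentIn_eq hy2
    have h4 : p ∈ E := by
      rw [hE, h3, ← h2]; exact mem_connectedComponentIn hpn
    rw [hEo.frontier_eq] at hp
    exact hp.2 h4
  have hDE : Disjoint D E := by
    rw [Set.disjoint_iff_inter_eq_empty]
    by_contra hne
    have hne := Set.nonempty_iff_ne_empty.mpr hne
    rw [Set.inter_comm] at hne
    exact hz₀ (sub_of_frontier hEp hD hfr.subset hEd hne hzE)
  refine ⟨E, hEo, hEp, hzE, hEs, hDE, ?_⟩
  obtain ⟨σ, hσ, hσD⟩ := L.side_meets hε₀ hDd (hfr ▸ Set.range_nonempty γ) hfr.subset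
  obtain ⟨τ, hτ, hτE⟩ := L.side_meets hε₀ hEd
    (nonempty_frontier_iff.mpr ⟨⟨z₀, hzE⟩, fun h => hEs (h ▸ Set.mem_univ (γ 0)) ⟨0, rfl⟩⟩) hEf
  have s1 := sub_of_frontier (L.side_pre ε₀ σ) hD hfr.subset (L.side_disj hc H hσ) hσD
  have s2 := sub_of_frontier (L.side_pre ε₀ τ) hEo hEf (L.side_disj hc H hτ) hτE
  have hne : τ ≠ σ := by
    rintro rfl
    obtain ⟨x, hx, -⟩ := hτE
    exact Set.disjoint_left.mp hDE (s1 hx) (s2 hx)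
  have : τ = -σ := by
    rcases hσ with rfl | rfl <;> rcases hτ with rfl | rfl <;> simp at hne ⊢
  exact ⟨σ, hσ, s1, this ▸ s2⟩

lemma Loop.core {γ h : ℝ → ℂ} (L : Loop γ) (hh : ContDiff ℝ 1 h)
    (hp : Function.Periodic h (2 * π)) {D : Set ℂ} (hD : IsOpen D) (hDb : Bornology.IsBounded D)
    (hDc : IsPreconnected D) (hfr : frontier D = Set.range γ)
    (hmom1 : ∀ k : ℕ, ∫ t in (0:ℝ)..(2 * π), (γ t) ^ k * 1 * deriv γ t = 0)
    (hmom : ∀ k : ℕ, ∫ t in (0:ℝ)..(2 * π), (γ t) ^ k * h t * deriv γ t = 0) :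
    ∃ F : ℂ → ℂ, ContinuousOn F (closure D) ∧ DifferentiableOn ℂ F D ∧ ∀ t, F (γ t) = h t := by
  classical
  obtain ⟨c, hc, ε₀, hε₀, H⟩ := L.tube
  obtain ⟨m, hm, hml⟩ := L.d_lower
  obtain ⟨R₁, hR₁, hγb⟩ := per_bound L.smooth.continuous L.per
  obtain ⟨R₂, hR₂⟩ := hDb.exists_norm_le
  set R := max R₁ R₂ with hR
  have hγR : ∀ t, ‖γ t‖ ≤ R := fun t => (hγb t).trans (le_max_left _ _)
  have hR0 : 0 < R := lt_of_lt_of_le hR₁ (le_max_left _ _)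
  set z₀ : ℂ := ((R + 1 : ℝ) : ℂ) with hz₀
  have nz₀ : R < ‖z₀‖ := by
    rw [hz₀, Complex.norm_real, Real.norm_eq_abs, abs_of_pos (by positivity)]; linarith
  have z₀D : z₀ ∉ D := fun hz => by
    have := (hR₂ z₀ hz).trans (le_max_right R₁ R₂)
    linarith
  have z₀γ : z₀ ∉ Set.range γ := by
    rintro ⟨t, ht⟩
    have := hγR t
    rw [ht] at this; linarith
  obtain ⟨E, hEo, hEp, hzE, hEs, hDE, σ, hσ, s1, s2⟩ := L.topo hc hε₀ H hD hfr z₀D z₀γ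
  have hDs : ∀ z ∈ D, z ∉ Set.range γ := by
    intro z hz
    rw [← hfr, hD.frontier_eq]; exact fun h => h.2 hz
  -- vanishing outside
  have van : ∀ k : ℝ → ℂ, Continuous k →
      (∀ n : ℕ, ∫ t in (0:ℝ)..(2 * π), (γ t) ^ n * k t * deriv γ t = 0) →
      ∀ z ∈ E, Cau γ k z = 0 := by
    intro k hk hkm
    have hdiff : DifferentiableOn ℂ (Cau γ k) E := fun z hz =>
      (L.cau_deriv hk (hEs hz)).differentiableAt.differentiableWithinAt
    refine (hdiff.analyticOnNhd hEo).eqOn_zero_of_preconnected_of_eventuallyEq_zero hEp hzE ?_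
    filter_upwards [(isOpen_lt continuous_const continuous_norm).mem_nhds nz₀] with z hz
    exact L.cau_far hk hkm hγR hz
  have van1 := van (fun _ => 1) continuous_const hmom1
  have vanh := van h hh.continuous hmom
  obtain ⟨n, hn⟩ : ∃ n, ∀ z ∈ D, Cau γ (fun _ => 1) z = n :=
    hD.exists_is_const_of_deriv_eq_zero hDc
      (fun z hz => (L.cau_one_deriv (hDs z hz)).differentiableAt.differentiableWithinAt)
      (fun z hz => (L.cau_one_deriv (hDs z hz)).deriv)
  have mside : ∀ (τ t ε : ℝ), 0 < ε → ε ≤ ε₀ →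
      γ t + (τ * ε : ℝ) * Complex.I * deriv γ t ∈ side γ ε₀ τ :=
    fun τ t ε h1 h2 => ⟨(t, ε), ⟨trivial, h1, h2⟩, rfl⟩
  have hn0 : n ≠ 0 := by
    rintro rfl
    obtain ⟨ε, e1, e2, e3⟩ := L.jump hc hε₀ H 0
    have a1 := hn _ (s1 (mside σ 0 ε e1 e2))
    have a2 := van1 _ (s2 (mside (-σ) 0 ε e1 e2))
    rcases hσ with rfl | rfl
    · rw [one_mul] at a1
      rw [neg_one_mul] at a2
      exact e3 (a1.trans a2.symm)
    · rw [neg_neg, one_mul] at a2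
      rw [neg_one_mul] at a1
      exact e3 (a2.trans a1.symm)
  obtain ⟨C, hC, hkey⟩ := L.key hh hp hc H
  obtain ⟨K, hK, hKl⟩ := per_lip hh hp
  have hlip : ∀ t s, ‖h s - h t‖ ≤ K / c * ‖γ s - γ t‖ := fun t s => by
    obtain ⟨u, k, hu, hs⟩ := exists_rep t s
    have h1 := H t u 0 hu (by simpa using hε₀.le)
    have h2 := hKl t (t + u)
    rw [hs, per_int hp, per_int L.per]
    rw [add_sub_cancel_left] at h2
    simp only [abs_zero, add_zero, Complex.ofReal_zero, zero_mul, sub_zero] at h1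
    rw [div_mul_eq_mul_div, le_div_iff₀ hc]
    nlinarith
  have hinv : ∀ t, h (Function.invFun γ (γ t)) = h t := fun t => by
    have : γ (Function.invFun γ (γ t)) = γ t := Function.invFun_eq ⟨t, rfl⟩
    obtain ⟨k, hk⟩ := L.inj' this
    rw [hk, per_int hp]
  set F : ℂ → ℂ := fun z => if z ∈ D then Cau γ h z / n else h (Function.invFun γ z) with hF
  have FD : ∀ z ∈ D, F z = Cau γ h z / n := fun z hz => if_pos hz
  have Fγ : ∀ t, F (γ t) = h t := fun t => by
    have : γ t ∉ D := fun hz => hDs _ hz ⟨t, rfl⟩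
    simp only [hF, if_neg this, hinv]
  have Fd : DifferentiableOn ℂ F D := by
    have : DifferentiableOn ℂ (fun z => Cau γ h z / n) D := fun z hz =>
      ((L.cau_deriv hh.continuous (hDs z hz)).differentiableAt.div_const n).differentiableWithinAt
    exact this.congr FD
  refine ⟨F, ?_, Fd, Fγ⟩
  intro p hpc
  by_cases hpD : p ∈ D
  · exact ((Fd.differentiableAt (hD.mem_nhds hpD)).continuousAt).continuousWithinAt
  have hpf : p ∈ Set.range γ := by rw [← hfr, hD.frontier_eq]; exact ⟨hpc, hpD⟩
  obtain ⟨t₀, rfl⟩ := hpf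
  rw [Metric.continuousWithinAt_iff]
  intro η hη
  have hn' : 0 < ‖n‖ := norm_pos_iff.mpr hn0
  have hpsi : ∀ᶠ x in nhdsWithin (0:ℝ) (Set.Ioi 0), psi x < η * ‖n‖ / (2 * C) :=
    psi_tendsto.eventually_lt_const (by positivity)
  obtain ⟨δ₁, hδ₁, hδ⟩ := mem_nhdsGT_iff_exists_Ioo_subset.mp hpsi
  have hδ₁ : 0 < δ₁ := hδ₁
  refine ⟨min (m * min δ₁ ε₀) (η / (4 * (K / c))), by positivity, ?_⟩
  intro z hz hdist
  rw [dist_eq_norm] at hdist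
  have d1 : ‖z - γ t₀‖ < m * min δ₁ ε₀ := hdist.trans_le (min_le_left _ _)
  have d2 : K / c * ‖z - γ t₀‖ < η / 4 := by
    have := hdist.trans_le (min_le_right _ _)
    rw [lt_div_iff₀ (by positivity)] at this
    linarith
  have hKc : 0 < K / c := by positivity
  rw [Fγ, dist_eq_norm]
  by_cases hzD : z ∈ D
  · obtain ⟨t, ε, hzt, hmin⟩ := L.nearest z
    have h1 := hmin t₀
    have h2 : ‖z - γ t‖ = |ε| * ‖deriv γ t‖ := by
      rw [hzt, add_sub_cancel_left, norm_mul, norm_mul, Complex.norm_I, mul_one, Complex.norm_real,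
        Real.norm_eq_abs]
    have h3 : |ε| * m ≤ |ε| * ‖deriv γ t‖ := by gcongr; exact hml t
    have h4 : |ε| < min δ₁ ε₀ := by
      by_contra hcon
      push Not at hcon
      nlinarith
    have h5 : ε ≠ 0 := by
      rintro rfl
      refine hDs z hzD ⟨t, ?_⟩
      rw [hzt]; simp
    have h6 : 0 < |ε| := abs_pos.mpr h5
    have h7 : |ε| ≤ ε₀ := (h4.trans_le (min_le_right _ _)).le
    have h8 : psi |ε| < η * ‖n‖ / (2 * C) := hδ ⟨h6, h4.trans_le (min_le_left _ _)⟩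
    have hεσ : ε = σ * |ε| := by
      by_contra hcon
      have : ε = -σ * |ε| := by
        rcases abs_choice ε with h | h <;> rcases hσ with rfl | rfl <;> rw [h] at hcon ⊢ <;>
          first
          | (exfalso; apply hcon; ring; done)
          | ring
      have hzE := s2 (mside (-σ) t |ε| h6 h7)
      rw [← this, ← hzt] at hzE
      exact Set.disjoint_left.mp hDE hzD hzE
    have hwE : γ t + (-ε : ℝ) * Complex.I * deriv γ t ∈ E := by
      have := s2 (mside (-σ) t |ε| h6 h7)
      rwa [neg_mul, ← hεσ] at this
    have h9 := hkey t ε h5 h7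
    rw [← hzt, van1 _ hwE, vanh _ hwE, hn z hzD, mul_zero, sub_zero, sub_zero] at h9
    have h10 : ‖F z - h t‖ < η / 2 := by
      have e : F z - h t = (Cau γ h z - h t * n) / n := by
        rw [FD z hzD]; field_simp
      rw [e, norm_div, div_lt_iff₀ hn']
      refine h9.trans_lt ?_
      rw [lt_div_iff₀ (by positivity)] at h8
      linarith
    have h11 : ‖γ t - γ t₀‖ ≤ 2 * ‖z - γ t₀‖ := by
      have := norm_sub_le (z - γ t₀) (z - γ t)
      rw [sub_sub_sub_cancel_left] at this
      linarith
    have h12 := hlip t₀ t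
    have h13 : ‖F z - h t₀‖ ≤ ‖F z - h t‖ + ‖h t - h t₀‖ := norm_sub_le_norm_sub_add_norm_sub _ _ _
    have h14 : K / c * ‖γ t - γ t₀‖ ≤ K / c * (2 * ‖z - γ t₀‖) := by gcongr
    linarith
  · have hzf : z ∈ Set.range γ := by rw [← hfr, hD.frontier_eq]; exact ⟨hz, hzD⟩
    obtain ⟨t, rfl⟩ := hzf
    rw [Fγ]
    have := hlip t₀ t
    linarith

end WHL

/-- Corollary 4.1, local Wermer–Harvey–Lawson: let `D ⊂ ℂ` be a bounded simply
connected domain with `C²` boundary, and `g : S¹ → ℂ^m` a `C²` embedded closed curve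
(`2π`-periodic, injective on a period, with nonvanishing derivative) whose last complex
coordinate parametrizes `∂D` as an embedding.  If `∫_{g(S¹)} φ = 0` for every holomorphic
1-form `φ = Σ_a f_a(z) dz^a` (each `f_a` entire on `ℂ^m`), then there is a holomorphic map
`G : D̄ → ℂ^m`, continuous up to the boundary, with `G(∂D) = g(S¹)`.
Here `ℂ^m` is `Fin (m+1) → ℂ` and the distinguished projection is the last coordinate. -/
theorem boundaries_of_holomorphic_disks
    (m : ℕ) (D : Set ℂ)
    (hD : IsOpen D) (hDb : Bornology.IsBounded D) (hDc : IsConnected D)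
    (hDsc : SimplyConnectedSpace D) (hC2 : HasC2Boundary D)
    (g : ℝ → Fin (m + 1) → ℂ) (hg : ContDiff ℝ 2 g)
    (hgper : Function.Periodic g (2 * π))
    (hginj : Set.InjOn g (Set.Ico 0 (2 * π)))
    (hgreg : ∀ t : ℝ, deriv g t ≠ 0)
    (hlast : (fun t => g t (Fin.last m)) '' Set.Ico 0 (2 * π) = frontier D)
    (hlastinj : Set.InjOn (fun t => g t (Fin.last m)) (Set.Ico 0 (2 * π)))
    (hlastreg : ∀ t : ℝ, deriv (fun s => g s (Fin.last m)) t ≠ 0)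
    (hmom : ∀ f : Fin (m + 1) → (Fin (m + 1) → ℂ) → ℂ, (∀ a, Differentiable ℂ (f a)) →
      ∫ t in (0:ℝ)..(2 * π),
        ∑ a : Fin (m + 1), f a (g t) * deriv (fun s => g s a) t = 0) :
    ∃ G : ℂ → Fin (m + 1) → ℂ,
      ContinuousOn G (closure D) ∧ DifferentiableOn ℂ G D ∧
      G '' frontier D = g '' Set.Ico 0 (2 * π) := by

  have hp : (0:ℝ) < 2 * π := by positivity
  set γ : ℝ → ℂ := fun t => g t (Fin.last m) with hγ
  have hcomp : ∀ a, ContDiff ℝ 2 (fun t => g t a) := fun a => contDiff_pi.mp hg a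
  have hcper : ∀ a, Function.Periodic (fun t => g t a) (2 * π) := fun a t => by
    show g (t + 2 * π) a = g t a
    rw [hgper t]
  have L : WHL.Loop γ := ⟨hcomp _, hcper _, hlastinj, hlastreg⟩
  have hfr : frontier D = Set.range γ := by
    rw [← hlast]
    refine Set.Subset.antisymm (Set.image_subset_range _ _) ?_
    rintro _ ⟨t, rfl⟩
    obtain ⟨s, hs, h⟩ := L.per.exists_mem_Ico₀ hp t
    exact ⟨s, hs, h.symm⟩
  have mom : ∀ P : (Fin (m + 1) → ℂ) → ℂ, Differentiable ℂ P →
      ∫ t in (0:ℝ)..(2 * π), P (g t) * deriv γ t = 0 := by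
    intro P hP
    have := hmom (fun a => if a = Fin.last m then P else fun _ => 0) (fun a => by
      by_cases h : a = Fin.last m
      · simp only [h, if_true]; exact hP
      · simp only [h, if_false]; exact differentiable_const _)
    rw [← this]
    congr 1
    ext t
    rw [Finset.sum_eq_single (Fin.last m)]
    · simp [hγ]
    · intro b _ hb
      simp [hb]
    · simp
  have hmom1 : ∀ k : ℕ, ∫ t in (0:ℝ)..(2 * π), (γ t) ^ k * 1 * deriv γ t = 0 := fun k =>
    mom (fun z => z (Fin.last m) ^ k * 1) (by fun_prop)
  have hF : ∀ a, ∃ F : ℂ → ℂ, ContinuousOn F (closure D) ∧ DifferentiableOn ℂ F D ∧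
      ∀ t, F (γ t) = g t a := fun a =>
    L.core ((hcomp a).of_le (by norm_num)) (hcper a) hD hDb hDc.isPreconnected hfr hmom1
      (fun k => mom (fun z => z (Fin.last m) ^ k * z a) (by fun_prop))
  choose F hF1 hF2 hF3 using hF
  refine ⟨fun z a => F a z, continuousOn_pi.mpr hF1, differentiableOn_pi.mpr hF2, ?_⟩
  rw [← hlast, Set.image_image]
  refine Set.image_congr fun t _ => ?_
  ext a
  exact hF3 a t
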